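/- For every D₀ > 0 there exist positive constants C and D̃ such that for every D > D̃, every B > D₀^{18}, every m ∈ ℤ with δ̃₁ < −D and |δ̃₁| ≤ D₀·B^{1/6}, and every ψ in the form domain of q_m: q_m[ψ] ≥ (Θ₀ + C·D^{1/2}·B^{−1/3})·‖ψ‖². -/

import Mathlib

noncomputable section
open MeasureTheory Real Filter Set Topology

/-- The de Gennes energy `λ₁^𝒢(ξ)`. -/
def deGennes (ξ : ℝ) : ℝ :=
  sInf { q : ℝ | ∃ u : ℝ → ℂ, ContDiff ℝ 1 u ∧
    IntegrableOn (fun t => ‖u t‖ ^ 2) (Ioi 0) ∧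
    IntegrableOn (fun t => ‖deriv u t‖ ^ 2 + (t + ξ) ^ 2 * ‖u t‖ ^ 2) (Ioi 0) ∧
    0 < (∫ t in Ioi (0:ℝ), ‖u t‖ ^ 2) ∧
    q = (∫ t in Ioi (0:ℝ), (‖deriv u t‖ ^ 2 + (t + ξ) ^ 2 * ‖u t‖ ^ 2)) /
        ∫ t in Ioi (0:ℝ), ‖u t‖ ^ 2 }

/-- `Θ₀`, the infimum of the de Gennes energy. -/
def Theta0 : ℝ := ⨅ ξ : ℝ, deGennes ξ

/-- The half plane `ℝ²₊ = {(τ, ρ) : τ > 0}`. -/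
def halfPlane : Set (ℝ × ℝ) := Ioi (0:ℝ) ×ˢ (univ : Set ℝ)

/-- The potential of the effective operator `Q_m(B)`. -/
def qPot (B : ℝ) (m : ℤ) (p : ℝ × ℝ) : ℝ :=
  (p.1 + ((m : ℝ) - B / 2) / Real.sqrt B + B ^ (-(1:ℝ)/6) * p.2 ^ 2 / 2) ^ 2

/-- The integrand of the quadratic form `q_m`. -/
def qIntegrand (B : ℝ) (m : ℤ) (ψ : ℝ × ℝ → ℂ) (p : ℝ × ℝ) : ℝ :=
  ‖fderiv ℝ ψ p (1, 0)‖ ^ 2 + qPot B m p * ‖ψ p‖ ^ 2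
    + B ^ (-(1:ℝ)/3) * ‖fderiv ℝ ψ p (0, 1)‖ ^ 2

/-- The quadratic form `q_m[ψ]`. -/
def qForm (B : ℝ) (m : ℤ) (ψ : ℝ × ℝ → ℂ) : ℝ :=
  ∫ p in halfPlane, qIntegrand B m ψ p

/-- Membership in the form domain of `q_m`. -/
def InFormDomain (B : ℝ) (m : ℤ) (ψ : ℝ × ℝ → ℂ) : Prop :=
  ContDiff ℝ 1 ψ ∧ IntegrableOn (fun p => ‖ψ p‖ ^ 2) halfPlane ∧
    IntegrableOn (qIntegrand B m ψ) halfPlane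

/-- The rescaled momentum `δ̃₁ = ((m - B/2)/√B - ξ₀)·B^{1/6}`. -/
def delta1 (B : ℝ) (m : ℤ) (ξ₀ : ℝ) : ℝ :=
  (((m : ℝ) - B / 2) / Real.sqrt B - ξ₀) * B ^ ((1:ℝ)/6)

/-- Second derivative in the `τ` direction. -/
def d2τ (ψ : ℝ × ℝ → ℂ) (p : ℝ × ℝ) : ℂ :=
  fderiv ℝ (fun q => fderiv ℝ ψ q ((1:ℝ), (0:ℝ))) p (1, 0)

/-- Second derivative in the `ρ` direction. -/
def d2ρ (ψ : ℝ × ℝ → ℂ) (p : ℝ × ℝ) : ℂ :=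
  fderiv ℝ (fun q => fderiv ℝ ψ q ((0:ℝ), (1:ℝ))) p (0, 1)

/-- An eigenfunction of the model operator `Q_m(B)` on the half plane, with Neumann
boundary condition at `τ = 0`, eigenvalue `lam`, which is nonzero, smooth up to the
boundary, and lies in `L²` together with its first derivatives. -/
def IsQEigenfunction (B : ℝ) (m : ℤ) (lam : ℝ) (ψ : ℝ × ℝ → ℂ) : Prop :=
  ContDiff ℝ (⊤ : ℕ∞) ψ ∧
  IntegrableOn (fun p => ‖ψ p‖ ^ 2) halfPlane ∧
  IntegrableOn (fun p => ‖fderiv ℝ ψ p ((1:ℝ), (0:ℝ))‖ ^ 2) halfPlane ∧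
  IntegrableOn (fun p => ‖fderiv ℝ ψ p ((0:ℝ), (1:ℝ))‖ ^ 2) halfPlane ∧
  0 < (∫ p in halfPlane, ‖ψ p‖ ^ 2) ∧
  (∀ p ∈ halfPlane,
    -d2τ ψ p - ((B ^ (-(1:ℝ)/3) : ℝ) : ℂ) * d2ρ ψ p + ((qPot B m p : ℝ) : ℂ) * ψ p
      = (lam : ℂ) * ψ p) ∧
  (∀ ρ : ℝ, fderiv ℝ ψ ((0:ℝ), ρ) ((1:ℝ), (0:ℝ)) = 0)

/-!
For frozen `ρ` the form in `τ` is the de Gennes form at `f ρ = ξ₀ + ε (ρ² / 2 + δ)`, with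
`ε = B^(-1/6)` and `δ` the rescaled momentum, so `q_m` dominates the operator
`-ε² ∂_ρ² + λ(f ρ)` on the line, `λ` being the de Gennes energy. A quadratic lower bound for
`λ - Θ₀` near `ξ₀` bounds `λ(f ρ)` below by `Θ₀` plus a double well with minima at `±√(2|δ|)` and
curvature of order `ε² |δ|` there, whose energy is of order `ε² |δ|^(1/2)`.

One-dimensional energies are bounded below by Riccati subsolutions: if `μ + g' + g² ≤ V`, then
`μ |u|² + (g |u|²)' ≤ |u'|² + V |u|²` pointwise. For the double well `g` is an explicit rational
function. The quadratic bound for the de Gennes energy needs no spectral theory. Cutting a trial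
function off at `h` (with a Riccati subsolution on `[0, h]`) if `ξ ≤ ξ₀`, or extending it to
`(-h, ∞)` if `ξ₀ < ξ`, and comparing with `Θ₀` on the new half line shows that the form exceeds `Θ₀`
times the mass by `d |u(0)|²`, with `d` of order `(ξ - ξ₀)²`. Here `Θ₀ = ξ₀²` enters, which holds
because no such gain is possible at `ξ₀` itself. The gain combines with
`‖u‖² + ξ |u(0)|² ≤ form` and `Θ₀ < 1` into a lower bound for `λ(ξ) - Θ₀`.
-/

section Riccati

variable {E : Type*} [NormedAddCommGroup E] [InnerProductSpace ℝ E]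
  {u : ℝ → E} {g V : ℝ → ℝ} {lam t : ℝ}

lemma neg_le_two_mul_mul_inner (c : ℝ) (x y : E) :
    -(c ^ 2 * ‖x‖ ^ 2 + ‖y‖ ^ 2) ≤ c * (2 * inner ℝ x y) := by
  have h := norm_add_sq_real (c • x) y
  rw [inner_smul_left, norm_smul, mul_pow, Real.norm_eq_abs, sq_abs, conj_trivial] at h
  linarith [sq_nonneg ‖c • x + y‖]

lemma two_mul_mul_inner_le (c : ℝ) (x y : E) :
    c * (2 * inner ℝ x y) ≤ c ^ 2 * ‖x‖ ^ 2 + ‖y‖ ^ 2 := by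
  linarith [neg_sq c ▸ neg_le_two_mul_mul_inner (-c) x y]

lemma deriv_mul_norm_sq (hg : DifferentiableAt ℝ g t) (hu : DifferentiableAt ℝ u t) :
    deriv (fun s ↦ g s * ‖u s‖ ^ 2) t
      = deriv g t * ‖u t‖ ^ 2 + g t * (2 * inner ℝ (u t) (deriv u t)) :=
  (hg.hasDerivAt.mul hu.hasDerivAt.norm_sq).deriv

lemma abs_deriv_mul_norm_sq_le (hg : DifferentiableAt ℝ g t) (hu : DifferentiableAt ℝ u t) :
    |deriv (fun s ↦ g s * ‖u s‖ ^ 2) t|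
      ≤ (|deriv g t| + g t ^ 2) * ‖u t‖ ^ 2 + ‖deriv u t‖ ^ 2 := by
  have hflux : |g t * (2 * inner ℝ (u t) (deriv u t))| ≤ g t ^ 2 * ‖u t‖ ^ 2 + ‖deriv u t‖ ^ 2 :=
    abs_le.2 ⟨neg_le_two_mul_mul_inner _ _ _, two_mul_mul_inner_le _ _ _⟩
  calc |deriv (fun s ↦ g s * ‖u s‖ ^ 2) t|
      ≤ |deriv g t * ‖u t‖ ^ 2| + |g t * (2 * inner ℝ (u t) (deriv u t))| := by
        rw [deriv_mul_norm_sq hg hu]; exact abs_add_le _ _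
    _ ≤ |deriv g t| * ‖u t‖ ^ 2 + (g t ^ 2 * ‖u t‖ ^ 2 + ‖deriv u t‖ ^ 2) := by
        rw [abs_mul, abs_of_nonneg (sq_nonneg ‖u t‖)]; gcongr
    _ = _ := by ring

lemma mul_norm_sq_add_deriv_le_of_riccati (hg : DifferentiableAt ℝ g t)
    (hu : DifferentiableAt ℝ u t) (h : lam + deriv g t + g t ^ 2 ≤ V t) :
    lam * ‖u t‖ ^ 2 + deriv (fun s ↦ g s * ‖u s‖ ^ 2) t
      ≤ ‖deriv u t‖ ^ 2 + V t * ‖u t‖ ^ 2 := by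
  rw [deriv_mul_norm_sq hg hu]
  linarith [two_mul_mul_inner_le (g t) (u t) (deriv u t),
    mul_le_mul_of_nonneg_right h (sq_nonneg ‖u t‖)]

lemma mul_intervalIntegral_norm_sq_le_of_riccati {a b : ℝ} (hab : a ≤ b) (hu : ContDiff ℝ 1 u)
    (hg : ContDiff ℝ 1 g) (hV : Continuous V)
    (h : ∀ t ∈ Icc a b, lam + deriv g t + g t ^ 2 ≤ V t) :
    lam * (∫ t in a..b, ‖u t‖ ^ 2) + (g b * ‖u b‖ ^ 2 - g a * ‖u a‖ ^ 2)
      ≤ ∫ t in a..b, (‖deriv u t‖ ^ 2 + V t * ‖u t‖ ^ 2) := by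
  have hF : ContDiff ℝ 1 fun t ↦ g t * ‖u t‖ ^ 2 := hg.mul (hu.norm_sq ℝ)
  have hF' : Continuous (deriv fun t ↦ g t * ‖u t‖ ^ 2) := hF.continuous_deriv_one
  have hu₀ : Continuous u := hu.continuous
  rw [← intervalIntegral.integral_deriv_eq_sub (fun t _ ↦ hF.differentiable one_ne_zero t)
      (hF'.intervalIntegrable _ _), ← intervalIntegral.integral_const_mul,
    ← intervalIntegral.integral_add (Continuous.intervalIntegrable (by fun_prop) _ _)
      (hF'.intervalIntegrable _ _)]
  exact intervalIntegral.integral_mono_on hab (Continuous.intervalIntegrable (by fun_prop) _ _)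
    (Continuous.intervalIntegrable (by fun_prop) _ _) fun t ht ↦
      mul_norm_sq_add_deriv_le_of_riccati (hg.differentiable one_ne_zero t)
        (hu.differentiable one_ne_zero t) (h t ht)

lemma mul_integral_norm_sq_le_of_riccati (hu : ContDiff ℝ 1 u) (hg : ContDiff ℝ 1 g)
    (hV : Continuous V) {M M' K : ℝ} (hgM : ∀ t, |g t| ≤ M) (hg'M : ∀ t, |deriv g t| ≤ M')
    (hVK : ∀ t, |V t| ≤ K) (hmass : Integrable fun t ↦ ‖u t‖ ^ 2)
    (hkin : Integrable fun t ↦ ‖deriv u t‖ ^ 2) (h : ∀ t, lam + deriv g t + g t ^ 2 ≤ V t) :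
    lam * (∫ t, ‖u t‖ ^ 2) ≤ ∫ t, (‖deriv u t‖ ^ 2 + V t * ‖u t‖ ^ 2) := by
  have hF : ContDiff ℝ 1 fun t ↦ g t * ‖u t‖ ^ 2 := hg.mul (hu.norm_sq ℝ)
  have hgd := hg.differentiable one_ne_zero
  have hud := hu.differentiable one_ne_zero
  have hFint : Integrable fun t ↦ g t * ‖u t‖ ^ 2 :=
    hmass.bdd_mul hg.continuous.aestronglyMeasurable (ae_of_all _ hgM)
  have hVint : Integrable fun t ↦ V t * ‖u t‖ ^ 2 :=
    hmass.bdd_mul hV.aestronglyMeasurable (ae_of_all _ hVK)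
  have hF'int : Integrable (deriv fun t ↦ g t * ‖u t‖ ^ 2) := by
    refine ((hmass.const_mul (M' + M ^ 2)).add hkin).mono'
      hF.continuous_deriv_one.aestronglyMeasurable (ae_of_all _ fun t ↦ ?_)
    refine (abs_deriv_mul_norm_sq_le (hgd t) (hud t)).trans ?_
    have : g t ^ 2 ≤ M ^ 2 := sq_le_sq' (abs_le.1 (hgM t)).1 (abs_le.1 (hgM t)).2
    simp only [Pi.add_apply]
    gcongr
    exact hg'M t
  have hflux : ∫ t, deriv (fun t ↦ g t * ‖u t‖ ^ 2) t = 0 :=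
    integral_eq_zero_of_hasDerivAt_of_integrable
      (fun t ↦ (hF.differentiable one_ne_zero t).hasDerivAt) hF'int hFint
  calc lam * (∫ t, ‖u t‖ ^ 2)
      = ∫ t, (lam * ‖u t‖ ^ 2 + deriv (fun t ↦ g t * ‖u t‖ ^ 2) t) := by
        rw [integral_add (hmass.const_mul lam) hF'int, hflux, integral_const_mul, add_zero]
    _ ≤ _ := integral_mono ((hmass.const_mul lam).add hF'int) (hkin.add hVint) fun t ↦
        mul_norm_sq_add_deriv_le_of_riccati (hgd t) (hud t) (h t)

end Riccati

section HalfLine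

/-- The squared `L²` norm of `u` on the half line `(a, ∞)`. -/
def halfLineMass (a : ℝ) (u : ℝ → ℂ) : ℝ := ∫ t in Ioi a, ‖u t‖ ^ 2

/-- The quadratic form of the shifted harmonic oscillator on `(a, ∞)`, whose infimum over
normalised functions is `deGennes ξ` when `a = 0`. -/
def deGennesForm (ξ a : ℝ) (u : ℝ → ℂ) : ℝ :=
  ∫ t in Ioi a, (‖deriv u t‖ ^ 2 + (t + ξ) ^ 2 * ‖u t‖ ^ 2)

/-- The trial functions for `deGennesForm ξ a`: the class over which `deGennes` takes its
infimum, with a variable endpoint `a` so that it can be translated, restricted and extended. -/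
structure DeGennesAdmissible (ξ a : ℝ) (u : ℝ → ℂ) : Prop where
  contDiff : ContDiff ℝ 1 u
  integrableOn_mass : IntegrableOn (fun t ↦ ‖u t‖ ^ 2) (Ioi a)
  integrableOn_form : IntegrableOn (fun t ↦ ‖deriv u t‖ ^ 2 + (t + ξ) ^ 2 * ‖u t‖ ^ 2) (Ioi a)

variable {ξ a h d : ℝ} {u v : ℝ → ℂ}

lemma halfLineMass_nonneg (a : ℝ) (u : ℝ → ℂ) : 0 ≤ halfLineMass a u :=
  integral_nonneg fun _ ↦ by positivity

lemma deGennesForm_nonneg (ξ a : ℝ) (u : ℝ → ℂ) : 0 ≤ deGennesForm ξ a u :=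
  integral_nonneg fun t ↦ by change 0 ≤ ‖deriv u t‖ ^ 2 + (t + ξ) ^ 2 * ‖u t‖ ^ 2; positivity

lemma deGennes_nonneg (ξ : ℝ) : 0 ≤ deGennes ξ := by
  apply Real.sInf_nonneg
  rintro _ ⟨u, -, -, -, hu, rfl⟩
  exact div_nonneg (deGennesForm_nonneg ξ 0 u) hu.le

lemma Theta0_nonneg : 0 ≤ Theta0 := Real.iInf_nonneg deGennes_nonneg

lemma Theta0_le_deGennes (ξ : ℝ) : Theta0 ≤ deGennes ξ :=
  ciInf_le ⟨0, forall_mem_range.2 deGennes_nonneg⟩ ξ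

namespace DeGennesAdmissible

lemma deGennes_mul_mass_le (hu : DeGennesAdmissible ξ 0 u) :
    deGennes ξ * halfLineMass 0 u ≤ deGennesForm ξ 0 u := by
  rcases (halfLineMass_nonneg 0 u).eq_or_lt with hmass | hmass
  · rw [← hmass, mul_zero]
    exact deGennesForm_nonneg ξ 0 u
  · rw [← le_div_iff₀ hmass]
    refine csInf_le ⟨0, ?_⟩
      ⟨u, hu.contDiff, hu.integrableOn_mass, hu.integrableOn_form, hmass, rfl⟩
    rintro _ ⟨w, -, -, -, hw, rfl⟩
    exact div_nonneg (deGennesForm_nonneg ξ 0 w) hw.le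

lemma mono (hu : DeGennesAdmissible ξ a u) {b : ℝ} (hab : a ≤ b) : DeGennesAdmissible ξ b u :=
  ⟨hu.contDiff, hu.integrableOn_mass.mono_set (Ioi_subset_Ioi hab),
    hu.integrableOn_form.mono_set (Ioi_subset_Ioi hab)⟩

end DeGennesAdmissible

lemma integrableOn_Ioi_comp_add_right {E : Type*} [NormedAddCommGroup E] {f : ℝ → E}
    (hf : IntegrableOn f (Ioi a)) : IntegrableOn (fun t ↦ f (t + a)) (Ioi 0) := by
  simpa [Function.comp_def] using ((measurePreserving_add_right volume a).integrableOn_comp_preimage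
    (measurableEmbedding_addRight a)).2 hf

lemma setIntegral_Ioi_comp_add_right {E : Type*} [NormedAddCommGroup E] [NormedSpace ℝ E]
    (f : ℝ → E) (a : ℝ) : ∫ t in Ioi 0, f (t + a) = ∫ t in Ioi a, f t := by
  simpa using (measurePreserving_add_right volume a).setIntegral_preimage_emb
    (measurableEmbedding_addRight a) f (Ioi a)

lemma deGennes_density_comp_add_right (ξ a : ℝ) (u : ℝ → ℂ) :
    (fun t ↦ ‖deriv (fun s ↦ u (s + a)) t‖ ^ 2 + (t + (ξ + a)) ^ 2 * ‖u (t + a)‖ ^ 2)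
      = fun t ↦ ‖deriv u (t + a)‖ ^ 2 + (t + a + ξ) ^ 2 * ‖u (t + a)‖ ^ 2 := by
  funext t
  rw [deriv_comp_add_const, add_comm ξ a, add_assoc]

namespace DeGennesAdmissible

lemma comp_add_right (hu : DeGennesAdmissible ξ a u) :
    DeGennesAdmissible (ξ + a) 0 fun t ↦ u (t + a) where
  contDiff := hu.contDiff.comp (by fun_prop)
  integrableOn_mass := integrableOn_Ioi_comp_add_right hu.integrableOn_mass
  integrableOn_form := by
    rw [deGennes_density_comp_add_right]
    exact integrableOn_Ioi_comp_add_right hu.integrableOn_form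

lemma Theta0_mul_mass_le (hu : DeGennesAdmissible ξ a u) :
    Theta0 * halfLineMass a u ≤ deGennesForm ξ a u := by
  have hmass : halfLineMass 0 (fun t ↦ u (t + a)) = halfLineMass a u :=
    setIntegral_Ioi_comp_add_right (fun t ↦ ‖u t‖ ^ 2) a
  have hform : deGennesForm (ξ + a) 0 (fun t ↦ u (t + a)) = deGennesForm ξ a u := by
    rw [deGennesForm, deGennes_density_comp_add_right]
    exact setIntegral_Ioi_comp_add_right (fun t ↦ ‖deriv u t‖ ^ 2 + (t + ξ) ^ 2 * ‖u t‖ ^ 2) a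
  rw [← hmass, ← hform]
  exact (mul_le_mul_of_nonneg_right (Theta0_le_deGennes _) (halfLineMass_nonneg _ _)).trans
    hu.comp_add_right.deGennes_mul_mass_le

lemma intervalIntegral_add_mass (hu : DeGennesAdmissible ξ a u) {b : ℝ} (hab : a ≤ b) :
    (∫ t in a..b, ‖u t‖ ^ 2) + halfLineMass b u = halfLineMass a u :=
  intervalIntegral.integral_interval_add_Ioi hu.integrableOn_mass (hu.mono hab).integrableOn_mass

lemma intervalIntegral_add_form (hu : DeGennesAdmissible ξ a u) {b : ℝ} (hab : a ≤ b) :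
    (∫ t in a..b, (‖deriv u t‖ ^ 2 + (t + ξ) ^ 2 * ‖u t‖ ^ 2)) + deGennesForm ξ b u
      = deGennesForm ξ a u :=
  intervalIntegral.integral_interval_add_Ioi hu.integrableOn_form (hu.mono hab).integrableOn_form

/-- With `g(t) = -(t + ξ)` the Riccati inequality is an equality with constant `1`: this is the
factorisation of the harmonic oscillator through its annihilation operator. -/
lemma mass_add_boundary_le (hu : DeGennesAdmissible ξ a u) :
    halfLineMass a u + (a + ξ) * ‖u a‖ ^ 2 ≤ deGennesForm ξ a u := by
  have hud := hu.contDiff.differentiable one_ne_zero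
  have hgd (t : ℝ) : DifferentiableAt ℝ (fun s ↦ -(s + ξ)) t := by fun_prop
  have hg' (t : ℝ) : deriv (fun s ↦ -(s + ξ)) t = -1 := by simp
  have hF : ContDiff ℝ 1 fun t ↦ -(t + ξ) * ‖u t‖ ^ 2 :=
    ContDiff.mul (by fun_prop) (hu.contDiff.norm_sq ℝ)
  have hdom := hu.integrableOn_mass.add hu.integrableOn_form
  have hFint : IntegrableOn (fun t ↦ -(t + ξ) * ‖u t‖ ^ 2) (Ioi a) := by
    refine hdom.mono' hF.continuous.aestronglyMeasurable (ae_of_all _ fun t ↦ ?_)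
    have hlin : |t + ξ| ≤ 1 + (t + ξ) ^ 2 := by
      rw [← sq_abs]; nlinarith [sq_nonneg (|t + ξ| - 1)]
    simp only [Pi.add_apply, norm_mul, norm_neg, Real.norm_eq_abs, norm_pow, abs_norm]
    nlinarith [mul_le_mul_of_nonneg_right hlin (sq_nonneg ‖u t‖), sq_nonneg ‖deriv u t‖]
  have hF'int : IntegrableOn (deriv fun t ↦ -(t + ξ) * ‖u t‖ ^ 2) (Ioi a) := by
    refine hdom.mono' hF.continuous_deriv_one.aestronglyMeasurable (ae_of_all _ fun t ↦ ?_)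
    have hle := abs_deriv_mul_norm_sq_le (hgd t) (hud t)
    rw [hg', abs_neg, abs_one, neg_sq] at hle
    rw [Pi.add_apply, Real.norm_eq_abs]
    linarith
  have hF' (t : ℝ) := (hF.differentiable one_ne_zero t).hasDerivAt
  have hflux : ∫ t in Ioi a, deriv (fun t ↦ -(t + ξ) * ‖u t‖ ^ 2) t = (a + ξ) * ‖u a‖ ^ 2 := by
    rw [integral_Ioi_of_hasDerivAt_of_tendsto' (fun t _ ↦ hF' t) hF'int
      (tendsto_zero_of_hasDerivAt_of_integrableOn_Ioi (fun t _ ↦ hF' t) hF'int hFint)]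
    ring
  rw [← hflux, halfLineMass, ← integral_add hu.integrableOn_mass hF'int]
  refine integral_mono (hu.integrableOn_mass.add hF'int) hu.integrableOn_form fun t ↦ ?_
  have hpoint := mul_norm_sq_add_deriv_le_of_riccati (lam := 1) (V := fun t ↦ (t + ξ) ^ 2)
    (hgd t) (hud t) (by rw [hg', neg_sq]; norm_num)
  rwa [one_mul] at hpoint

end DeGennesAdmissible

/-- The Gaussian `exp (-t² / 2)`, the trial function that shows `Theta0 < 1`. -/
def gaussian (t : ℝ) : ℂ := (rexp (-t ^ 2 / 2) : ℝ)

lemma hasDerivAt_gaussian (t : ℝ) : HasDerivAt gaussian (-t * gaussian t) t := by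
  have hexp : HasDerivAt (fun t : ℝ ↦ rexp (-t ^ 2 / 2)) (-t * rexp (-t ^ 2 / 2)) t := by
    refine (((hasDerivAt_pow 2 t).neg.div_const 2).exp).congr_deriv ?_
    simp only [Pi.neg_apply]
    ring
  have hcast := hexp.ofReal_comp
  rwa [Complex.ofReal_mul, Complex.ofReal_neg] at hcast

lemma norm_gaussian_sq (t : ℝ) : ‖gaussian t‖ ^ 2 = rexp (-t ^ 2) := by
  rw [gaussian, Complex.norm_real, Real.norm_eq_abs, sq_abs, ← Real.exp_nat_mul]
  congr 1
  push_cast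
  ring

lemma deGennes_density_gaussian (ξ t : ℝ) :
    ‖deriv gaussian t‖ ^ 2 + (t + ξ) ^ 2 * ‖gaussian t‖ ^ 2
      = 2 * (t ^ 2 * rexp (-t ^ 2)) + 2 * ξ * (t * rexp (-t ^ 2)) + ξ ^ 2 * rexp (-t ^ 2) := by
  rw [(hasDerivAt_gaussian t).deriv, norm_mul, mul_pow, norm_gaussian_sq, norm_neg,
    Complex.norm_real, Real.norm_eq_abs, sq_abs]
  ring

lemma integrable_pow_mul_exp_neg_sq (n : ℕ) : Integrable fun t : ℝ ↦ t ^ n * rexp (-t ^ 2) := by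
  simpa using integrable_rpow_mul_exp_neg_mul_sq one_pos (s := n)
    (neg_one_lt_zero.trans_le n.cast_nonneg)

lemma integral_Ioi_pow_mul_exp_neg_sq (n : ℕ) :
    ∫ t in Ioi (0 : ℝ), t ^ n * rexp (-t ^ 2) = 1 / 2 * Real.Gamma ((n + 1) / 2) := by
  simpa using integral_rpow_mul_exp_neg_rpow two_pos (q := n)
    (neg_one_lt_zero.trans_le n.cast_nonneg)

lemma halfLineMass_gaussian : halfLineMass 0 gaussian = √π / 2 := by
  simpa [halfLineMass, norm_gaussian_sq] using integral_gaussian_Ioi 1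

lemma integrable_deGennes_density_gaussian_terms (ξ : ℝ) :
    Integrable (fun t : ℝ ↦ 2 * (t ^ 2 * rexp (-t ^ 2))) ∧
      Integrable (fun t : ℝ ↦ 2 * ξ * (t * rexp (-t ^ 2))) ∧
      Integrable (fun t : ℝ ↦ ξ ^ 2 * rexp (-t ^ 2)) :=
  ⟨(integrable_pow_mul_exp_neg_sq 2).const_mul 2,
    by simpa using (integrable_pow_mul_exp_neg_sq 1).const_mul (2 * ξ),
    by simpa using (integrable_pow_mul_exp_neg_sq 0).const_mul (ξ ^ 2)⟩

lemma deGennesAdmissible_gaussian (ξ : ℝ) : DeGennesAdmissible ξ 0 gaussian where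
  contDiff := Complex.ofRealCLM.contDiff.comp (f := fun t : ℝ ↦ rexp (-t ^ 2 / 2)) (by fun_prop)
  integrableOn_mass := by
    simpa [norm_gaussian_sq] using (integrable_pow_mul_exp_neg_sq 0).integrableOn
  integrableOn_form := by
    obtain ⟨h₂, h₁, h₀⟩ := integrable_deGennes_density_gaussian_terms ξ
    simp only [deGennes_density_gaussian]
    exact ((h₂.add h₁).add h₀).integrableOn

lemma deGennesForm_gaussian (ξ : ℝ) :
    deGennesForm ξ 0 gaussian = (1 + ξ ^ 2) * (√π / 2) + ξ := by
  obtain ⟨h₂, h₁, h₀⟩ := integrable_deGennes_density_gaussian_terms ξ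
  have hmoment₀ : ∫ t in Ioi (0 : ℝ), rexp (-t ^ 2) = √π / 2 := by
    simpa using integral_gaussian_Ioi 1
  have hmoment₁ : ∫ t in Ioi (0 : ℝ), t * rexp (-t ^ 2) = 1 / 2 := by
    simpa using integral_Ioi_pow_mul_exp_neg_sq 1
  have hmoment₂ : ∫ t in Ioi (0 : ℝ), t ^ 2 * rexp (-t ^ 2) = √π / 4 := by
    rw [integral_Ioi_pow_mul_exp_neg_sq, show ((2 : ℕ) + 1 : ℝ) / 2 = 1 / 2 + 1 by norm_num,
      Real.Gamma_add_one (by norm_num), Real.Gamma_one_half_eq]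
    ring
  have h₂₁ : IntegrableOn
      (fun t ↦ 2 * (t ^ 2 * rexp (-t ^ 2)) + 2 * ξ * (t * rexp (-t ^ 2))) (Ioi 0) :=
    (h₂.add h₁).integrableOn
  simp only [deGennesForm, deGennes_density_gaussian]
  rw [integral_add h₂₁ h₀.integrableOn,
    integral_add h₂.integrableOn h₁.integrableOn]
  simp only [integral_const_mul, hmoment₀, hmoment₁, hmoment₂]
  ring

lemma Theta0_lt_one : Theta0 < 1 := by
  have hπ : 0 < √π := Real.sqrt_pos.2 Real.pi_pos
  have hle := (deGennesAdmissible_gaussian (-1 / √π)).Theta0_mul_mass_le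
  have hmin : (1 + (-1 / √π) ^ 2) * (√π / 2) + -1 / √π = √π / 2 - 1 / (2 * √π) := by
    field_simp
    ring
  rw [halfLineMass_gaussian, deGennesForm_gaussian, hmin] at hle
  have hgain : 0 < 1 / (2 * √π) := by positivity
  exact lt_of_mul_lt_mul_right (by linarith) (half_pos hπ).le

lemma le_deGennes {l : ℝ}
    (h : ∀ u, DeGennesAdmissible ξ 0 u → l * halfLineMass 0 u ≤ deGennesForm ξ 0 u) :
    l ≤ deGennes ξ := by
  have hgauss := deGennesAdmissible_gaussian ξ
  have hpos : 0 < halfLineMass 0 gaussian := by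
    rw [halfLineMass_gaussian]
    positivity
  refine le_csInf ⟨_, gaussian, hgauss.contDiff, hgauss.integrableOn_mass,
    hgauss.integrableOn_form, hpos, rfl⟩ ?_
  rintro _ ⟨u, hu, hmass, hform, hpos, rfl⟩
  exact (le_div_iff₀ hpos).2 (h u ⟨hu, hmass, hform⟩)

lemma one_le_deGennes (hξ : 0 ≤ ξ) : 1 ≤ deGennes ξ :=
  le_deGennes fun u hu ↦ by
    have hosc := hu.mass_add_boundary_le
    rw [zero_add] at hosc
    linarith [mul_nonneg hξ (sq_nonneg ‖u 0‖)]

lemma neg_of_deGennes_eq_Theta0 (hξ : deGennes ξ = Theta0) : ξ < 0 :=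
  not_le.1 fun h ↦ (hξ ▸ one_le_deGennes h).not_gt Theta0_lt_one

/-- `d` is an energy gain at the Neumann end: the form exceeds `Theta0` times the mass by at least
`d` times the squared boundary value, on every trial function. -/
def BoundaryGain (ξ d : ℝ) : Prop :=
  ∀ u, DeGennesAdmissible ξ 0 u → Theta0 * halfLineMass 0 u + d * ‖u 0‖ ^ 2 ≤ deGennesForm ξ 0 u

lemma boundaryGain_of_riccati {g : ℝ → ℝ} (hh : 0 ≤ h) (hg : ContDiff ℝ 1 g) (hgh : g h = 0)
    (hriccati : ∀ t ∈ Icc 0 h, Theta0 + deriv g t + g t ^ 2 ≤ (t + ξ) ^ 2) :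
    BoundaryGain ξ (-g 0) := by
  intro u hu
  have hnear := mul_intervalIntegral_norm_sq_le_of_riccati hh hu.contDiff hg
    (V := fun t ↦ (t + ξ) ^ 2) (by fun_prop) hriccati
  rw [hgh] at hnear
  rw [← hu.intervalIntegral_add_mass hh, ← hu.intervalIntegral_add_form hh]
  linarith [(hu.mono hh).Theta0_mul_mass_le]

lemma integral_exp_mul_le_inv {n t : ℝ} (hn : 0 < n) :
    ∫ s in t..0, rexp (n * s) ≤ n⁻¹ := by
  rw [intervalIntegral.integral_comp_mul_left _ hn.ne', integral_exp, mul_zero, Real.exp_zero,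
    smul_eq_mul]
  exact mul_le_of_le_one_right (by positivity) (by linarith [Real.exp_pos (n * t)])

/-- The exponentially decaying slope keeps the extension `C¹` and, for large `n`, makes it nearly
constant on `t < 0`. -/
lemma exists_contDiff_extension_exp {E : Type*} [NormedAddCommGroup E] [NormedSpace ℝ E]
    [CompleteSpace E] {u : ℝ → E} (hu : ContDiff ℝ 1 u) (n : ℝ) :
    ∃ v : ℝ → E, ContDiff ℝ 1 v ∧ EqOn v u (Ici 0) ∧
      ∀ t ≤ 0, deriv v t = rexp (n * t) • deriv u 0 := by
  have hu' : Continuous (deriv u) := hu.continuous_deriv_one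
  set w : ℝ → E := fun s ↦ rexp (n * min s 0) • deriv u (max s 0) with hw
  have hwc : Continuous w := by fun_prop
  have hv (t : ℝ) : HasDerivAt (fun t ↦ u 0 + ∫ s in 0..t, w s) (w t) t :=
    (hwc.integral_hasStrictDerivAt 0 t).hasDerivAt.const_add (u 0)
  have hv' : deriv (fun t ↦ u 0 + ∫ s in 0..t, w s) = w := funext fun t ↦ (hv t).deriv
  refine ⟨fun t ↦ u 0 + ∫ s in 0..t, w s, ?_, fun t ht ↦ ?_, fun t ht ↦ ?_⟩
  · rw [contDiff_one_iff_deriv, hv']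
    exact ⟨fun t ↦ (hv t).differentiableAt, hwc⟩
  · have hwu : ∫ s in 0..t, w s = ∫ s in 0..t, deriv u s :=
      intervalIntegral.integral_congr fun s hs ↦ by
        rw [uIcc_of_le ht] at hs
        simp [hw, hs.1]
    simp only [hwu]
    rw [intervalIntegral.integral_deriv_eq_sub (fun s _ ↦ hu.differentiable one_ne_zero s)
      (hu'.intervalIntegrable _ _), add_sub_cancel]
  · rw [hv', hw]
    simp [ht]

lemma exists_contDiff_extension_almost_const {E : Type*} [NormedAddCommGroup E] [NormedSpace ℝ E]
    [CompleteSpace E] {u : ℝ → E} (hu : ContDiff ℝ 1 u) {ε : ℝ} (hε : 0 < ε) :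
    ∃ v : ℝ → E, ContDiff ℝ 1 v ∧ EqOn v u (Ici 0) ∧ (∀ t ≤ 0, ‖v t - u 0‖ ≤ ε) ∧
      ∀ t ≤ 0, ∫ s in t..0, ‖deriv v s‖ ^ 2 ≤ ε := by
  set c := ‖deriv u 0‖
  set n := (1 + c + c ^ 2) / ε with hn_def
  have hc : 0 ≤ c := norm_nonneg _
  have hn : 0 < n := by positivity
  have hcn : c * n⁻¹ ≤ ε := by
    rw [← div_eq_mul_inv, div_le_iff₀ hn, hn_def, mul_div_cancel₀ _ hε.ne']
    linarith [sq_nonneg c]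
  have hcn' : c ^ 2 * n⁻¹ ≤ ε := by
    rw [← div_eq_mul_inv, div_le_iff₀ hn, hn_def, mul_div_cancel₀ _ hε.ne']
    linarith
  obtain ⟨v, hv, hvu, hv'⟩ := exists_contDiff_extension_exp hu n
  have hnorm {s : ℝ} (hs : s ≤ 0) : ‖deriv v s‖ = rexp (n * s) * c := by
    rw [hv' s hs, norm_smul, Real.norm_eq_abs, abs_of_pos (Real.exp_pos _)]
  have hv'c : Continuous (deriv v) := hv.continuous_deriv_one
  refine ⟨v, hv, hvu, fun t ht ↦ ?_, fun t ht ↦ ?_⟩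
  · calc ‖v t - u 0‖ = ‖∫ s in t..0, deriv v s‖ := by
          rw [intervalIntegral.integral_deriv_eq_sub (fun s _ ↦ hv.differentiable one_ne_zero s)
            (hv'c.intervalIntegrable _ _), hvu (mem_Ici.2 le_rfl), norm_sub_rev]
      _ ≤ ∫ s in t..0, rexp (n * s) * c :=
          intervalIntegral.norm_integral_le_of_norm_le ht
            (ae_of_all _ fun s hs ↦ (hnorm hs.2).le)
            (Continuous.intervalIntegrable (by fun_prop) _ _)
      _ ≤ c * n⁻¹ := by
          rw [intervalIntegral.integral_mul_const, mul_comm]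
          exact mul_le_mul_of_nonneg_left (integral_exp_mul_le_inv hn) hc
      _ ≤ ε := hcn
  · calc ∫ s in t..0, ‖deriv v s‖ ^ 2 ≤ ∫ s in t..0, c ^ 2 * rexp (n * s) := by
          refine intervalIntegral.integral_mono_on ht
            (Continuous.intervalIntegrable (by fun_prop) _ _)
            (Continuous.intervalIntegrable (by fun_prop) _ _) fun s hs ↦ ?_
          have hle : rexp (n * s) ≤ 1 :=
            Real.exp_le_one_iff.2 (mul_nonpos_of_nonneg_of_nonpos hn.le hs.2)
          rw [hnorm hs.2, mul_pow, mul_comm]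
          gcongr
          exact pow_le_of_le_one (Real.exp_pos _).le hle two_ne_zero
      _ ≤ c ^ 2 * n⁻¹ := by
          rw [intervalIntegral.integral_const_mul]
          exact mul_le_mul_of_nonneg_left (integral_exp_mul_le_inv hn) (sq_nonneg c)
      _ ≤ ε := hcn'

lemma halfLineMass_congr (huv : EqOn v u (Ioi a)) : halfLineMass a v = halfLineMass a u :=
  setIntegral_congr_fun measurableSet_Ioi fun t ht ↦ by simp only [huv ht]

lemma eqOn_deGennes_density (ξ : ℝ) (huv : EqOn v u (Ioi a)) :
    EqOn (fun t ↦ ‖deriv v t‖ ^ 2 + (t + ξ) ^ 2 * ‖v t‖ ^ 2)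
      (fun t ↦ ‖deriv u t‖ ^ 2 + (t + ξ) ^ 2 * ‖u t‖ ^ 2) (Ioi a) := fun t ht ↦ by
  simp only [huv ht, huv.deriv isOpen_Ioi ht]

lemma deGennesForm_congr (ξ : ℝ) (huv : EqOn v u (Ioi a)) :
    deGennesForm ξ a v = deGennesForm ξ a u :=
  setIntegral_congr_fun measurableSet_Ioi (eqOn_deGennes_density ξ huv)

namespace DeGennesAdmissible

lemma congr (hu : DeGennesAdmissible ξ a u) (hv : ContDiff ℝ 1 v) (huv : EqOn v u (Ioi a)) :
    DeGennesAdmissible ξ a v where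
  contDiff := hv
  integrableOn_mass := hu.integrableOn_mass.congr_fun
    (fun t ht ↦ by simp only [huv ht]) measurableSet_Ioi
  integrableOn_form := hu.integrableOn_form.congr_fun
    (eqOn_deGennes_density ξ huv).symm measurableSet_Ioi

lemma extend_left (hu : DeGennesAdmissible ξ a u) {b : ℝ} (hba : b ≤ a) :
    DeGennesAdmissible ξ b u := by
  have hu₀ : Continuous u := hu.contDiff.continuous
  have hu₁ : Continuous (deriv u) := hu.contDiff.continuous_deriv_one
  refine ⟨hu.contDiff, ?_, ?_⟩ <;> rw [← Ioc_union_Ioi_eq_Ioi hba]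
  · exact (Continuous.integrableOn_Ioc (by fun_prop)).union hu.integrableOn_mass
  · exact (Continuous.integrableOn_Ioc (by fun_prop)).union hu.integrableOn_form

end DeGennesAdmissible

lemma integral_add_sq (ξ h : ℝ) :
    ∫ t in -h..0, (t + ξ) ^ 2 = h * ξ ^ 2 - h ^ 2 * ξ + h ^ 3 / 3 := by
  rw [intervalIntegral.integral_comp_add_right (fun x ↦ x ^ 2), integral_pow]
  push_cast
  ring

lemma Theta0_mul_le_of_almost_const_extension (hh : 0 < h) {ε : ℝ} (hε : 0 < ε)
    (hu : DeGennesAdmissible ξ 0 u) :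
    Theta0 * (halfLineMass 0 u + h * (‖u 0‖ ^ 2 - 2 * ‖u 0‖ * ε))
      ≤ deGennesForm ξ 0 u
        + (ε + (‖u 0‖ + ε) ^ 2 * (h * ξ ^ 2 - h ^ 2 * ξ + h ^ 3 / 3)) := by
  obtain ⟨v, hv, hvu, hclose, hkin⟩ := exists_contDiff_extension_almost_const hu.contDiff hε
  have hh₀ : -h ≤ 0 := neg_nonpos.2 hh.le
  have hvu' : EqOn v u (Ioi 0) := hvu.mono Ioi_subset_Ici_self
  have hvadm : DeGennesAdmissible ξ (-h) v := (hu.congr hv hvu').extend_left hh₀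
  have hv₀ : Continuous v := hv.continuous
  have : Continuous (deriv v) := hv.continuous_deriv_one
  have hmass : h * (‖u 0‖ ^ 2 - 2 * ‖u 0‖ * ε) ≤ ∫ t in -h..0, ‖v t‖ ^ 2 := by
    have hconst : ∫ _t in -h..0, (‖u 0‖ ^ 2 - 2 * ‖u 0‖ * ε) ≤ ∫ t in -h..0, ‖v t‖ ^ 2 := by
      refine intervalIntegral.integral_mono_on hh₀
        (Continuous.intervalIntegrable (by fun_prop) _ _)
        (Continuous.intervalIntegrable (by fun_prop) _ _) fun t ht ↦ ?_
      have hlow : ‖u 0‖ - ‖v t‖ ≤ ε :=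
        (norm_sub_norm_le _ _).trans (norm_sub_rev (v t) (u 0) ▸ hclose t ht.2)
      nlinarith [norm_nonneg (u 0), sq_nonneg (‖u 0‖ - ‖v t‖)]
    rwa [intervalIntegral.integral_const, smul_eq_mul, zero_sub, neg_neg] at hconst
  have hform : ∫ t in -h..0, (‖deriv v t‖ ^ 2 + (t + ξ) ^ 2 * ‖v t‖ ^ 2)
      ≤ ε + (‖u 0‖ + ε) ^ 2 * (h * ξ ^ 2 - h ^ 2 * ξ + h ^ 3 / 3) := by
    rw [← integral_add_sq, ← intervalIntegral.integral_const_mul, intervalIntegral.integral_add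
      (Continuous.intervalIntegrable (by fun_prop) _ _)
      (Continuous.intervalIntegrable (by fun_prop) _ _)]
    refine add_le_add (hkin _ hh₀) (intervalIntegral.integral_mono_on hh₀
      (Continuous.intervalIntegrable (by fun_prop) _ _)
      (Continuous.intervalIntegrable (by fun_prop) _ _) fun t ht ↦ ?_)
    have hup : ‖v t‖ ≤ ‖u 0‖ + ε := by linarith [norm_sub_norm_le (v t) (u 0), hclose t ht.2]
    rw [mul_comm]
    gcongr
  have hTheta := hvadm.Theta0_mul_mass_le
  rw [← hvadm.intervalIntegral_add_mass hh₀, ← hvadm.intervalIntegral_add_form hh₀,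
    halfLineMass_congr hvu', deGennesForm_congr ξ hvu'] at hTheta
  linarith [mul_le_mul_of_nonneg_left hmass Theta0_nonneg]

/-- Extending `u` by the constant `u 0` to `(-h, ∞)` and comparing with `Theta0` there. -/
lemma boundaryGain_of_extension (ξ : ℝ) (hh : 0 < h) :
    BoundaryGain ξ (h * Theta0 - (h * ξ ^ 2 - h ^ 2 * ξ + h ^ 3 / 3)) := by
  intro u hu
  have hleft : Continuous fun ε : ℝ ↦
      Theta0 * (halfLineMass 0 u + h * (‖u 0‖ ^ 2 - 2 * ‖u 0‖ * ε)) := by fun_prop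
  have hright : Continuous fun ε : ℝ ↦ deGennesForm ξ 0 u
      + (ε + (‖u 0‖ + ε) ^ 2 * (h * ξ ^ 2 - h ^ 2 * ξ + h ^ 3 / 3)) := by fun_prop
  have hlimit := le_of_tendsto_of_tendsto (hleft.continuousWithinAt (x := 0))
    (hright.continuousWithinAt (x := 0)) (eventually_mem_nhdsWithin.mono fun _ hε ↦
      Theta0_mul_le_of_almost_const_extension hh (mem_Ioi.1 hε) hu)
  simp only [mul_zero, sub_zero, zero_add, add_zero] at hlimit
  linarith

/-- The boundary value controls the distance of the quotient to `Theta0`: either `‖u 0‖²` is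
large and the gain acts, or it is small and `mass_add_boundary_le` almost gives energy `1`. -/
lemma BoundaryGain.add_le_deGennes (h : BoundaryGain ξ d) (hd : 0 ≤ d) {L : ℝ} (hL : 0 < L)
    (hξ : -L ≤ ξ) : Theta0 + d * (1 - Theta0) / (d + L) ≤ deGennes ξ := by
  refine le_deGennes fun u hu ↦ ?_
  have hsum : 0 < d + L := by positivity
  have hgain := mul_le_mul_of_nonneg_left (h u hu) hL.le
  have hosc : halfLineMass 0 u - L * ‖u 0‖ ^ 2 ≤ deGennesForm ξ 0 u := by
    have hflux := hu.mass_add_boundary_le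
    rw [zero_add] at hflux
    linarith [mul_le_mul_of_nonneg_right hξ (sq_nonneg ‖u 0‖)]
  have hcombine : (Theta0 + d * (1 - Theta0) / (d + L)) * halfLineMass 0 u * (d + L)
      = L * (Theta0 * halfLineMass 0 u) + d * halfLineMass 0 u := by
    field_simp
    ring
  refine le_of_mul_le_mul_right ?_ hsum
  rw [hcombine]
  linarith [mul_le_mul_of_nonneg_left hosc hd]

lemma BoundaryGain.nonpos (h : BoundaryGain ξ d) (hξ : deGennes ξ = Theta0) : d ≤ 0 := by
  by_contra! hd
  have hξ₀ : 0 < -ξ := neg_pos.2 (neg_of_deGennes_eq_Theta0 hξ)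
  have hle := h.add_le_deGennes hd.le hξ₀ (neg_neg ξ).le
  have hpos : 0 < d * (1 - Theta0) / (d + -ξ) :=
    div_pos (mul_pos hd (sub_pos.2 Theta0_lt_one)) (by positivity)
  linarith

lemma Theta0_le_sq (hξ : deGennes ξ = Theta0) : Theta0 ≤ ξ ^ 2 := by
  have hgain : ∀ᶠ h in 𝓝[>] (0 : ℝ), Theta0 - ξ ^ 2 + h * ξ - h ^ 2 / 3 ≤ 0 :=
    eventually_mem_nhdsWithin.mono fun h (hh : 0 < h) ↦
      nonpos_of_mul_nonpos_right (by linarith [(boundaryGain_of_extension ξ hh).nonpos hξ]) hh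
  have hcont : Continuous fun h : ℝ ↦ Theta0 - ξ ^ 2 + h * ξ - h ^ 2 / 3 := by fun_prop
  have hlimit := le_of_tendsto (hcont.continuousWithinAt (x := 0)) hgain
  simpa using hlimit

lemma sq_le_Theta0 (hξ : deGennes ξ = Theta0) : ξ ^ 2 ≤ Theta0 := by
  by_contra! hlt
  have hcont : Continuous fun h : ℝ ↦ h + h ^ 4 - 2 * h * ξ := by fun_prop
  have hsmall : ∀ᶠ h in 𝓝[>] (0 : ℝ), h + h ^ 4 - 2 * h * ξ < ξ ^ 2 - Theta0 :=
    (hcont.continuousWithinAt (x := 0)).eventually_lt_const (by norm_num; exact hlt)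
  obtain ⟨h, hsmall, hh : 0 < h⟩ := (hsmall.and eventually_mem_nhdsWithin).exists
  have hgain : BoundaryGain ξ (-(h * (0 - h))) := by
    refine boundaryGain_of_riccati (g := fun t ↦ h * (t - h)) hh.le (by fun_prop) (by simp)
      fun t ht ↦ ?_
    have hderiv : deriv (fun t ↦ h * (t - h)) t = h := by simp
    have hsq : (h * (t - h)) ^ 2 ≤ h ^ 4 := by
      have hle : (h - t) ^ 2 ≤ h ^ 2 :=
        pow_le_pow_left₀ (sub_nonneg.2 ht.2) (sub_le_self h ht.1) 2
      linarith [mul_le_mul_of_nonneg_left hle (sq_nonneg h)]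
    have hξt : h * ξ ≤ t * ξ :=
      mul_le_mul_of_nonpos_right ht.2 (neg_of_deGennes_eq_Theta0 hξ).le
    rw [hderiv]
    linarith [sq_nonneg t]
  linarith [hgain.nonpos hξ, mul_pos hh hh]

lemma Theta0_eq_sq (hξ : deGennes ξ = Theta0) : Theta0 = ξ ^ 2 :=
  (Theta0_le_sq hξ).antisymm (sq_le_Theta0 hξ)

section Nondegeneracy

variable {ξ₀ κ D₀ : ℝ}

lemma BoundaryGain.anti {d' : ℝ} (h : BoundaryGain ξ d) (hd : d' ≤ d) : BoundaryGain ξ d' :=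
  fun u hu ↦ (by gcongr : _ ≤ Theta0 * halfLineMass 0 u + d * ‖u 0‖ ^ 2).trans (h u hu)

lemma boundaryGain_of_gt (hξ₀ : deGennes ξ₀ = Theta0) (hκ : 3 * κ ≤ -2 * ξ₀) (hξ₀ξ : ξ₀ < ξ)
    (hξ : ξ ≤ 0) : BoundaryGain ξ (κ * (ξ - ξ₀) ^ 2) := by
  refine (boundaryGain_of_extension ξ (sub_pos.2 hξ₀ξ)).anti ?_
  have hgain : (ξ - ξ₀) * Theta0 - ((ξ - ξ₀) * ξ ^ 2 - (ξ - ξ₀) ^ 2 * ξ + (ξ - ξ₀) ^ 3 / 3)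
      = (-ξ₀ - (ξ - ξ₀) / 3) * (ξ - ξ₀) ^ 2 := by
    rw [Theta0_eq_sq hξ₀]
    ring
  rw [hgain]
  gcongr
  linarith

lemma boundaryGain_of_le (hξ₀ : deGennes ξ₀ = Theta0)
    (hκD₀ : 2 * κ + κ ^ 2 * D₀ ^ 3 ≤ -2 * ξ₀) (hξξ₀ : ξ ≤ ξ₀) (hξ : ξ₀ - D₀ ≤ ξ) :
    BoundaryGain ξ (κ * (ξ - ξ₀) ^ 2) := by
  have hgain : BoundaryGain ξ (-(-κ * (ξ₀ - ξ - 0) ^ 2)) := by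
    refine boundaryGain_of_riccati (g := fun t ↦ -κ * (ξ₀ - ξ - t) ^ 2) (sub_nonneg.2 hξξ₀)
      (by fun_prop) (by simp) fun t ht ↦ ?_
    have hderiv : deriv (fun t ↦ -κ * (ξ₀ - ξ - t) ^ 2) t = 2 * κ * (ξ₀ - ξ - t) := by
      refine ((((hasDerivAt_id t).const_sub (ξ₀ - ξ)).pow 2).const_mul (-κ)).deriv.trans ?_
      simp only [Nat.cast_ofNat, id_eq, Nat.add_one_sub_one, pow_one, mul_neg, mul_one,
        neg_mul, neg_neg]
      ring
    have hs : 0 ≤ ξ₀ - ξ - t := sub_nonneg.2 ht.2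
    have hcube : (ξ₀ - ξ - t) ^ 3 ≤ D₀ ^ 3 := pow_le_pow_left₀ hs (by linarith [ht.1]) 3
    have hslope : 2 * κ + κ ^ 2 * (ξ₀ - ξ - t) ^ 3 ≤ -2 * ξ₀ :=
      (by gcongr : _ ≤ 2 * κ + κ ^ 2 * D₀ ^ 3).trans hκD₀
    rw [hderiv, Theta0_eq_sq hξ₀]
    linarith [mul_le_mul_of_nonneg_right hslope hs, sq_nonneg (ξ₀ - ξ - t)]
  exact hgain.anti (by linarith)

lemma exists_Theta0_add_min_le_deGennes (hξ₀ : deGennes ξ₀ = Theta0) (hD₀ : 0 < D₀) :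
    ∃ c > 0, ∀ ξ, ξ₀ - D₀ ≤ ξ → Theta0 + c * min 1 ((ξ - ξ₀) ^ 2) ≤ deGennes ξ := by
  have hneg := neg_of_deGennes_eq_Theta0 hξ₀
  obtain ⟨κ, hκ, hκξ₀, hκD₀⟩ :
      ∃ κ > 0, 3 * κ ≤ -2 * ξ₀ ∧ 2 * κ + κ ^ 2 * D₀ ^ 3 ≤ -2 * ξ₀ := by
    have hlim : Tendsto (fun κ : ℝ ↦ 3 * κ + κ ^ 2 * D₀ ^ 3) (𝓝[>] 0) (𝓝 0) :=
      (by fun_prop : Continuous fun κ : ℝ ↦ 3 * κ + κ ^ 2 * D₀ ^ 3).tendsto' 0 0 (by simp)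
        |>.mono_left nhdsWithin_le_nhds
    obtain ⟨κ, hlt, hκ : 0 < κ⟩ := ((hlim.eventually_lt_const (by linarith : 0 < -2 * ξ₀)).and
      eventually_mem_nhdsWithin).exists
    exact ⟨κ, hκ, by linarith [mul_nonneg (sq_nonneg κ) (pow_pos hD₀ 3).le], by linarith⟩
  have hL : 0 < D₀ - ξ₀ := by linarith
  have hgap : 0 < 1 - Theta0 := sub_pos.2 Theta0_lt_one
  refine ⟨κ * (1 - Theta0) / (κ + (D₀ - ξ₀)), by positivity, fun ξ hξ ↦ ?_⟩
  set m := min 1 ((ξ - ξ₀) ^ 2)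
  have hm₀ : 0 ≤ m := le_min zero_le_one (sq_nonneg _)
  have hm₁ : m ≤ 1 := min_le_left _ _
  rcases le_or_gt 0 ξ with hpos | hξneg
  · have hc : κ * (1 - Theta0) / (κ + (D₀ - ξ₀)) ≤ 1 - Theta0 := by
      rw [div_le_iff₀ (by positivity)]
      linarith [mul_pos hgap hL]
    linarith [mul_le_mul hc hm₁ hm₀ hgap.le, one_le_deGennes hpos]
  · have hgain : BoundaryGain ξ (κ * (ξ - ξ₀) ^ 2) := by
      rcases lt_or_ge ξ₀ ξ with hgt | hle
      · exact boundaryGain_of_gt hξ₀ hκξ₀ hgt hξneg.le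
      · exact boundaryGain_of_le hξ₀ hκD₀ hle hξ
    have hgain' : BoundaryGain ξ (κ * m) := hgain.anti (by gcongr; exact min_le_right _ _)
    refine le_trans ?_ (hgain'.add_le_deGennes (by positivity) hL (by linarith))
    rw [div_mul_eq_mul_div, mul_right_comm]
    gcongr
    exact mul_le_of_le_one_right hκ.le hm₁

end Nondegeneracy

end HalfLine

section DoubleWell

/-- A bounded double well with minima at `±√2`, below `(r² - 2)²`. -/
def doubleWell (r : ℝ) : ℝ := ((r ^ 2 - 2) / (1 + r ^ 2)) ^ 2

/-- The function whose rescalings solve the Riccati inequality for `doubleWell`: it increases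
through `0` at both minima and is bounded by half the square root of `doubleWell`. -/
def doubleWellFlux (r : ℝ) : ℝ := (r ^ 3 - 2 * r) / (1 + r ^ 2) ^ 2

variable {c σ : ℝ} (r : ℝ)

lemma doubleWell_nonneg : 0 ≤ doubleWell r := sq_nonneg _

lemma doubleWell_le_four : doubleWell r ≤ 4 := by
  rw [doubleWell, div_pow, div_le_iff₀ (by positivity)]
  nlinarith [sq_nonneg r, sq_nonneg (r ^ 2)]

lemma doubleWell_le : doubleWell r ≤ (r ^ 2 - 2) ^ 2 := by
  rw [doubleWell, div_pow]
  exact div_le_self (sq_nonneg _) (one_le_pow₀ (by linarith [sq_nonneg r]))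

@[fun_prop]
lemma continuous_doubleWell : Continuous doubleWell := by
  unfold doubleWell
  fun_prop (disch := intros; positivity)

lemma contDiff_doubleWellFlux : ContDiff ℝ 1 doubleWellFlux := by
  unfold doubleWellFlux
  exact ContDiff.div (by fun_prop) (by fun_prop) fun r ↦ by positivity

lemma deriv_doubleWellFlux :
    deriv doubleWellFlux r = (-r ^ 4 + 9 * r ^ 2 - 2) / (1 + r ^ 2) ^ 3 := by
  have hnum : HasDerivAt (fun r : ℝ ↦ r ^ 3 - 2 * r) (3 * r ^ 2 - 2) r := by
    exact ((hasDerivAt_pow 3 r).sub ((hasDerivAt_id r).const_mul 2)).congr_deriv (by simp)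
  have hden : HasDerivAt (fun r : ℝ ↦ (1 + r ^ 2) ^ 2) (4 * r * (1 + r ^ 2)) r := by
    refine (((hasDerivAt_pow 2 r).const_add 1).pow 2).congr_deriv ?_
    simp only [Nat.cast_ofNat, Nat.add_one_sub_one, pow_one]
    ring
  refine (hnum.div hden (by positivity)).deriv.trans ?_
  field_simp
  ring

lemma doubleWellFlux_sq_le : doubleWellFlux r ^ 2 ≤ doubleWell r / 4 := by
  have hflux : doubleWellFlux r ^ 2 = (r / (1 + r ^ 2)) ^ 2 * doubleWell r := by
    rw [doubleWellFlux, doubleWell]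
    field_simp
  have hquarter : (r / (1 + r ^ 2)) ^ 2 ≤ 1 / 4 := by
    rw [div_pow, div_le_div_iff₀ (by positivity) four_pos]
    linarith [sq_nonneg (r ^ 2 - 1)]
  rw [hflux]
  linarith [mul_le_mul_of_nonneg_right hquarter (doubleWell_nonneg r)]

lemma abs_doubleWellFlux_le_one : |doubleWellFlux r| ≤ 1 :=
  abs_le_of_sq_le_sq (by linarith [doubleWellFlux_sq_le r, doubleWell_le_four r]) zero_le_one

lemma abs_deriv_doubleWellFlux_le : |deriv doubleWellFlux r| ≤ 9 := by
  rw [deriv_doubleWellFlux, abs_le, le_div_iff₀ (by positivity), div_le_iff₀ (by positivity)]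
  constructor <;> nlinarith [sq_nonneg r, sq_nonneg (r ^ 2), pow_nonneg (sq_nonneg r) 3]

lemma one_tenth_le_deriv_doubleWellFlux_add : 1 / 10 ≤ deriv doubleWellFlux r + doubleWell r := by
  have hsum : deriv doubleWellFlux r + doubleWell r
      = (r ^ 6 - 4 * r ^ 4 + 9 * r ^ 2 + 2) / (1 + r ^ 2) ^ 3 := by
    rw [deriv_doubleWellFlux, doubleWell]
    field_simp
    ring
  rw [hsum, le_div_iff₀ (by positivity)]
  nlinarith [sq_nonneg r, mul_nonneg (sq_nonneg r) (sq_nonneg (r ^ 2 - 43 / 18)),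
    mul_nonneg (sq_nonneg r) (sq_nonneg r)]

lemma doubleWell_riccati {κ : ℝ} (hκ : 0 ≤ κ) (hκ₁ : κ ≤ 1) (hκc : κ ≤ c) (hσ : 2 ≤ σ) :
    κ / 10 * σ + -(κ * σ) * deriv doubleWellFlux r + (-(κ * σ ^ 2) * doubleWellFlux r) ^ 2
      ≤ c * σ ^ 4 * doubleWell r := by
  have hwell := doubleWell_nonneg r
  have hslope : κ * σ * (1 / 10) ≤ κ * σ * (deriv doubleWellFlux r + doubleWell r) := by
    gcongr
    exact one_tenth_le_deriv_doubleWellFlux_add r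
  have hsquare : (-(κ * σ ^ 2) * doubleWellFlux r) ^ 2 ≤ c * σ ^ 4 * doubleWell r / 4 := by
    have hκ₂ : κ ^ 2 ≤ c := by nlinarith
    calc (-(κ * σ ^ 2) * doubleWellFlux r) ^ 2 = κ ^ 2 * σ ^ 4 * doubleWellFlux r ^ 2 := by ring
      _ ≤ c * σ ^ 4 * (doubleWell r / 4) := by
        gcongr
        · exact mul_nonneg (hκ.trans hκc) (by positivity)
        · exact doubleWellFlux_sq_le r
      _ = _ := by ring
  have hlower : κ * σ * doubleWell r ≤ c * σ ^ 4 * doubleWell r / 2 := by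
    have hσ₃ : 2 ≤ σ ^ 3 := by linarith [pow_le_pow_left₀ zero_le_two hσ 3]
    have hcσ : 0 ≤ c * σ := mul_nonneg (hκ.trans hκc) (by linarith)
    calc κ * σ * doubleWell r ≤ c * σ * doubleWell r := by gcongr
      _ ≤ c * σ * doubleWell r * (σ ^ 3 / 2) :=
        le_mul_of_one_le_right (mul_nonneg hcσ hwell) (by linarith)
      _ = _ := by ring
  have hpos : 0 ≤ c * σ ^ 4 * doubleWell r :=
    mul_nonneg (mul_nonneg (hκ.trans hκc) (by positivity)) hwell
  linarith

/-- The depth `c σ⁴` makes the wells of curvature `σ²`, hence the energy of order `σ`. -/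
lemma mul_integral_norm_sq_le_doubleWell {E : Type*} [NormedAddCommGroup E] [InnerProductSpace ℝ E]
    (hc : 0 ≤ c) (hσ : 2 ≤ σ) {φ : ℝ → E} (hφ : ContDiff ℝ 1 φ)
    (hmass : Integrable fun ρ ↦ ‖φ ρ‖ ^ 2) (hkin : Integrable fun ρ ↦ ‖deriv φ ρ‖ ^ 2) :
    min 1 c / 10 * σ * ∫ ρ, ‖φ ρ‖ ^ 2
      ≤ ∫ ρ, (‖deriv φ ρ‖ ^ 2 + c * σ ^ 4 * doubleWell (ρ / σ) * ‖φ ρ‖ ^ 2) := by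
  set κ := min 1 c
  have hκ : 0 ≤ κ := le_min zero_le_one hc
  have hκσ : 0 ≤ κ * σ := by positivity
  have hderiv (ρ : ℝ) : deriv (fun ρ ↦ -(κ * σ ^ 2) * doubleWellFlux (σ⁻¹ * ρ)) ρ
      = -(κ * σ) * deriv doubleWellFlux (σ⁻¹ * ρ) := by
    rw [deriv_const_mul_field, deriv_comp_mul_left, smul_eq_mul]
    field_simp
  refine mul_integral_norm_sq_le_of_riccati
    (V := fun ρ ↦ c * σ ^ 4 * doubleWell (ρ / σ))
    (g := fun ρ ↦ -(κ * σ ^ 2) * doubleWellFlux (σ⁻¹ * ρ))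
    (M := κ * σ ^ 2 * 1) (M' := κ * σ * 9) (K := c * σ ^ 4 * 4) hφ
    (contDiff_const.mul (contDiff_doubleWellFlux.comp (by fun_prop))) (by fun_prop)
    (fun ρ ↦ ?_) (fun ρ ↦ ?_) (fun ρ ↦ ?_) hmass hkin fun ρ ↦ ?_
  · rw [abs_mul, abs_neg, abs_of_nonneg (by positivity)]
    gcongr
    exact abs_doubleWellFlux_le_one _
  · rw [hderiv, abs_mul, abs_neg, abs_of_nonneg hκσ]
    gcongr
    exact abs_deriv_doubleWellFlux_le _
  · rw [abs_mul, abs_of_nonneg (by positivity), abs_of_nonneg (doubleWell_nonneg _)]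
    gcongr
    exact doubleWell_le_four _
  · rw [hderiv, div_eq_inv_mul ρ]
    exact doubleWell_riccati _ hκ (min_le_left _ _) (min_le_right _ _) hσ

end DoubleWell

section BornOppenheimer

/-- The energy density in the first variable for the half-line operators `deGennesForm (f ρ) 0`,
with `ρ = p.2` a parameter. -/
def transverseEnergy (f : ℝ → ℝ) (ψ : ℝ × ℝ → ℂ) (p : ℝ × ℝ) : ℝ :=
  ‖fderiv ℝ ψ p (1, 0)‖ ^ 2 + (p.1 + f p.2) ^ 2 * ‖ψ p‖ ^ 2

lemma volume_restrict_halfPlane : (volume : Measure (ℝ × ℝ)).restrict halfPlane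
    = (volume.restrict (Ioi (0 : ℝ))).prod (volume : Measure ℝ) := by
  rw [halfPlane, Measure.volume_eq_prod, ← Measure.prod_restrict, Measure.restrict_univ]

variable {ψ : ℝ × ℝ → ℂ} {f W : ℝ → ℝ} {E Λ M : ℝ}

lemma deriv_slice_fst (hψ : Differentiable ℝ ψ) (τ ρ : ℝ) :
    deriv (fun t ↦ ψ (t, ρ)) τ = fderiv ℝ ψ (τ, ρ) (1, 0) :=
  ((hψ (τ, ρ)).hasFDerivAt.comp_hasDerivAt τ
    ((hasDerivAt_id τ).prodMk (hasDerivAt_const τ ρ))).deriv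

lemma deriv_slice_snd (hψ : Differentiable ℝ ψ) (τ ρ : ℝ) :
    deriv (fun t ↦ ψ (τ, t)) ρ = fderiv ℝ ψ (τ, ρ) (0, 1) :=
  ((hψ (τ, ρ)).hasFDerivAt.comp_hasDerivAt ρ
    ((hasDerivAt_const ρ τ).prodMk (hasDerivAt_id ρ))).deriv

lemma transverseEnergy_nonneg (f : ℝ → ℝ) (ψ : ℝ × ℝ → ℂ) (p : ℝ × ℝ) :
    0 ≤ transverseEnergy f ψ p := by
  unfold transverseEnergy
  positivity

lemma continuous_transverseEnergy (hf : Continuous f) (hψ : ContDiff ℝ 1 ψ) :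
    Continuous (transverseEnergy f ψ) := by
  have : Continuous ψ := hψ.continuous
  have : Continuous (fderiv ℝ ψ) := hψ.continuous_fderiv one_ne_zero
  unfold transverseEnergy
  fun_prop

lemma setIntegral_mul_norm_sq_le_transverseEnergy (hψ : ContDiff ℝ 1 ψ)
    (hW : ∀ ρ, W ρ ≤ deGennes (f ρ)) (hmass : IntegrableOn (fun p ↦ ‖ψ p‖ ^ 2) halfPlane)
    (hWmass : IntegrableOn (fun p ↦ W p.2 * ‖ψ p‖ ^ 2) halfPlane)
    (hT : IntegrableOn (transverseEnergy f ψ) halfPlane) :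
    ∫ p in halfPlane, W p.2 * ‖ψ p‖ ^ 2 ≤ ∫ p in halfPlane, transverseEnergy f ψ p := by
  rw [IntegrableOn, volume_restrict_halfPlane] at hmass hWmass hT
  rw [volume_restrict_halfPlane, integral_prod_symm _ hWmass, integral_prod_symm _ hT]
  refine integral_mono_ae hWmass.integral_prod_right hT.integral_prod_right ?_
  filter_upwards [hmass.prod_left_ae, hT.prod_left_ae] with ρ hmassρ hTρ
  have hslice : (fun t ↦ ‖deriv (fun t ↦ ψ (t, ρ)) t‖ ^ 2 + (t + f ρ) ^ 2 * ‖ψ (t, ρ)‖ ^ 2)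
      = fun t ↦ transverseEnergy f ψ (t, ρ) := by
    funext t
    rw [deriv_slice_fst (hψ.differentiable one_ne_zero), transverseEnergy]
  have hadm : DeGennesAdmissible (f ρ) 0 fun t ↦ ψ (t, ρ) :=
    ⟨hψ.comp (by fun_prop), hmassρ, by rw [hslice]; exact hTρ⟩
  calc ∫ τ in Ioi 0, W ρ * ‖ψ (τ, ρ)‖ ^ 2 = W ρ * halfLineMass 0 fun τ ↦ ψ (τ, ρ) :=
        integral_const_mul _ _
    _ ≤ deGennes (f ρ) * halfLineMass 0 fun τ ↦ ψ (τ, ρ) :=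
        mul_le_mul_of_nonneg_right (hW ρ) (halfLineMass_nonneg _ _)
    _ ≤ deGennesForm (f ρ) 0 fun τ ↦ ψ (τ, ρ) := hadm.deGennes_mul_mass_le
    _ = ∫ τ in Ioi 0, transverseEnergy f ψ (τ, ρ) := by rw [deGennesForm, hslice]

lemma mul_setIntegral_norm_sq_le_of_fiber (hψ : ContDiff ℝ 1 ψ)
    (hfiber : ∀ φ : ℝ → ℂ, ContDiff ℝ 1 φ → Integrable (fun ρ ↦ ‖φ ρ‖ ^ 2) →
      Integrable (fun ρ ↦ ‖deriv φ ρ‖ ^ 2) →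
      Λ * ∫ ρ, ‖φ ρ‖ ^ 2 ≤ ∫ ρ, (E * ‖deriv φ ρ‖ ^ 2 + W ρ * ‖φ ρ‖ ^ 2))
    (hmass : IntegrableOn (fun p ↦ ‖ψ p‖ ^ 2) halfPlane)
    (hWmass : IntegrableOn (fun p ↦ W p.2 * ‖ψ p‖ ^ 2) halfPlane)
    (hkin : IntegrableOn (fun p ↦ ‖fderiv ℝ ψ p (0, 1)‖ ^ 2) halfPlane) :
    Λ * ∫ p in halfPlane, ‖ψ p‖ ^ 2
      ≤ ∫ p in halfPlane, (E * ‖fderiv ℝ ψ p (0, 1)‖ ^ 2 + W p.2 * ‖ψ p‖ ^ 2) := by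
  have hsum : IntegrableOn
      (fun p ↦ E * ‖fderiv ℝ ψ p (0, 1)‖ ^ 2 + W p.2 * ‖ψ p‖ ^ 2) halfPlane :=
    (hkin.const_mul E).add hWmass
  rw [IntegrableOn, volume_restrict_halfPlane] at hmass hkin hsum
  rw [volume_restrict_halfPlane, integral_prod _ hmass, integral_prod _ hsum, ← integral_const_mul]
  refine integral_mono_ae (hmass.integral_prod_left.const_mul Λ) hsum.integral_prod_left ?_
  filter_upwards [hmass.prod_right_ae, hkin.prod_right_ae] with τ hmassτ hkinτ
  have hslice (ρ : ℝ) := deriv_slice_snd (hψ.differentiable one_ne_zero) τ ρ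
  have hbound := hfiber (fun ρ ↦ ψ (τ, ρ)) (hψ.comp (by fun_prop)) hmassτ
    (by simpa only [hslice] using hkinτ)
  simpa only [hslice] using hbound

lemma mul_setIntegral_norm_sq_le_of_effective (hψ : ContDiff ℝ 1 ψ) (hf : Continuous f)
    (hWc : Continuous W) (hWM : ∀ ρ, |W ρ| ≤ M) (hW : ∀ ρ, W ρ ≤ deGennes (f ρ)) (hE : 0 < E)
    (hmass : IntegrableOn (fun p ↦ ‖ψ p‖ ^ 2) halfPlane)
    (hform : IntegrableOn
      (fun p ↦ transverseEnergy f ψ p + E * ‖fderiv ℝ ψ p (0, 1)‖ ^ 2) halfPlane)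
    (hfiber : ∀ φ : ℝ → ℂ, ContDiff ℝ 1 φ → Integrable (fun ρ ↦ ‖φ ρ‖ ^ 2) →
      Integrable (fun ρ ↦ ‖deriv φ ρ‖ ^ 2) →
      Λ * ∫ ρ, ‖φ ρ‖ ^ 2 ≤ ∫ ρ, (E * ‖deriv φ ρ‖ ^ 2 + W ρ * ‖φ ρ‖ ^ 2)) :
    Λ * ∫ p in halfPlane, ‖ψ p‖ ^ 2
      ≤ ∫ p in halfPlane, (transverseEnergy f ψ p + E * ‖fderiv ℝ ψ p (0, 1)‖ ^ 2) := by
  have hT₀ := transverseEnergy_nonneg f ψ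
  have hkin₀ (p : ℝ × ℝ) : 0 ≤ E * ‖fderiv ℝ ψ p (0, 1)‖ ^ 2 := by positivity
  have hT : IntegrableOn (transverseEnergy f ψ) halfPlane :=
    integrable_left_of_integrable_add_of_nonneg
      (continuous_transverseEnergy hf hψ).aestronglyMeasurable
      (ae_of_all _ hT₀) (ae_of_all _ hkin₀) hform
  have hEkin : IntegrableOn (fun p ↦ E * ‖fderiv ℝ ψ p (0, 1)‖ ^ 2) halfPlane :=
    integrable_right_of_integrable_add_of_nonneg
      (continuous_transverseEnergy hf hψ).aestronglyMeasurable
      (ae_of_all _ hT₀) (ae_of_all _ hkin₀) hform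
  have hkin : IntegrableOn (fun p ↦ ‖fderiv ℝ ψ p (0, 1)‖ ^ 2) halfPlane := by
    simpa only [IntegrableOn, inv_mul_cancel_left₀ hE.ne'] using hEkin.const_mul E⁻¹
  have hWmass : IntegrableOn (fun p ↦ W p.2 * ‖ψ p‖ ^ 2) halfPlane :=
    hmass.bdd_mul (hWc.comp continuous_snd).aestronglyMeasurable (ae_of_all _ fun p ↦ hWM p.2)
  have heffective := mul_setIntegral_norm_sq_le_of_fiber hψ hfiber hmass hWmass hkin
  rw [integral_add hEkin hWmass] at heffective
  rw [integral_add hT hEkin]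
  linarith [setIntegral_mul_norm_sq_le_transverseEnergy hψ hW hmass hWmass hT]

end BornOppenheimer

section EffectivePotential

/-- The potential of the effective operator `-ε² ∂_ρ² + effectivePotential` on the line: a rescaled
`doubleWell`, with minima at the points where `ε * (ρ ^ 2 / 2 - σ ^ 2)` vanishes. -/
def effectivePotential (c ε σ ρ : ℝ) : ℝ :=
  Theta0 + ε ^ 2 * (c * σ ^ 4 * doubleWell (ρ / σ))

variable {c c₀ ε σ ξ₀ D₀ : ℝ}

@[fun_prop]
lemma continuous_effectivePotential : Continuous (effectivePotential c ε σ) := by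
  unfold effectivePotential
  fun_prop

lemma abs_effectivePotential_le (hc : 0 ≤ c) (ρ : ℝ) :
    |effectivePotential c ε σ ρ| ≤ Theta0 + ε ^ 2 * (c * σ ^ 4 * 4) := by
  have hwell := doubleWell_nonneg (ρ / σ)
  have hΘ := Theta0_nonneg
  rw [effectivePotential, abs_of_nonneg (by positivity)]
  gcongr
  exact doubleWell_le_four _

lemma sq_mul_doubleWell_le (hσ : σ ≠ 0) (hεσ : (ε * σ ^ 2) ^ 2 ≤ D₀ ^ 2) (ρ : ℝ) :
    (ε * σ ^ 2) ^ 2 * doubleWell (ρ / σ)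
      ≤ 4 * (1 + D₀ ^ 2) * min 1 ((ε * (ρ ^ 2 / 2 - σ ^ 2)) ^ 2) := by
  rw [mul_min_of_nonneg _ _ (by positivity)]
  refine le_min ?_ ?_
  · calc (ε * σ ^ 2) ^ 2 * doubleWell (ρ / σ) ≤ D₀ ^ 2 * 4 :=
          mul_le_mul hεσ (doubleWell_le_four _) (doubleWell_nonneg _) (sq_nonneg _)
      _ ≤ 4 * (1 + D₀ ^ 2) * 1 := by linarith
  · calc (ε * σ ^ 2) ^ 2 * doubleWell (ρ / σ)
          ≤ (ε * σ ^ 2) ^ 2 * ((ρ / σ) ^ 2 - 2) ^ 2 := by gcongr; exact doubleWell_le _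
      _ = 4 * (ε * (ρ ^ 2 / 2 - σ ^ 2)) ^ 2 := by field_simp; ring
      _ ≤ 4 * (1 + D₀ ^ 2) * (ε * (ρ ^ 2 / 2 - σ ^ 2)) ^ 2 := by
          gcongr
          linarith [sq_nonneg D₀]

lemma effectivePotential_le_deGennes (hc₀ : 0 ≤ c₀) (hε : 0 ≤ ε) (hσ : σ ≠ 0)
    (hεσ : ε * σ ^ 2 ≤ D₀)
    (hnondeg : ∀ ξ, ξ₀ - D₀ ≤ ξ → Theta0 + c₀ * min 1 ((ξ - ξ₀) ^ 2) ≤ deGennes ξ) (ρ : ℝ) :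
    effectivePotential (c₀ / (4 * (1 + D₀ ^ 2))) ε σ ρ
      ≤ deGennes (ξ₀ + ε * (ρ ^ 2 / 2 - σ ^ 2)) := by
  have hwell := sq_mul_doubleWell_le hσ (pow_le_pow_left₀ (by positivity) hεσ 2) ρ
  have hρ : 0 ≤ ε * (ρ ^ 2 / 2) := by positivity
  have hgap := hnondeg (ξ₀ + ε * (ρ ^ 2 / 2 - σ ^ 2)) (by linarith)
  rw [add_sub_cancel_left] at hgap
  calc effectivePotential (c₀ / (4 * (1 + D₀ ^ 2))) ε σ ρ
      = Theta0 + c₀ / (4 * (1 + D₀ ^ 2)) * ((ε * σ ^ 2) ^ 2 * doubleWell (ρ / σ)) := by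
        rw [effectivePotential]; ring
    _ ≤ Theta0 + c₀ / (4 * (1 + D₀ ^ 2))
          * (4 * (1 + D₀ ^ 2) * min 1 ((ε * (ρ ^ 2 / 2 - σ ^ 2)) ^ 2)) := by gcongr
    _ = Theta0 + c₀ * min 1 ((ε * (ρ ^ 2 / 2 - σ ^ 2)) ^ 2) := by field_simp
    _ ≤ deGennes (ξ₀ + ε * (ρ ^ 2 / 2 - σ ^ 2)) := hgap

lemma mul_integral_norm_sq_le_effectivePotential (hc : 0 ≤ c) (hσ : 2 ≤ σ) {φ : ℝ → ℂ}
    (hφ : ContDiff ℝ 1 φ) (hmass : Integrable fun ρ ↦ ‖φ ρ‖ ^ 2)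
    (hkin : Integrable fun ρ ↦ ‖deriv φ ρ‖ ^ 2) :
    (Theta0 + min 1 c / 10 * σ * ε ^ 2) * ∫ ρ, ‖φ ρ‖ ^ 2
      ≤ ∫ ρ, (ε ^ 2 * ‖deriv φ ρ‖ ^ 2 + effectivePotential c ε σ ρ * ‖φ ρ‖ ^ 2) := by
  have hwell : Integrable fun ρ ↦ c * σ ^ 4 * doubleWell (ρ / σ) * ‖φ ρ‖ ^ 2 := by
    refine hmass.bdd_mul (c := |c * σ ^ 4| * 4) (by fun_prop) (ae_of_all _ fun ρ ↦ ?_)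
    rw [norm_eq_abs, abs_mul, abs_of_nonneg (doubleWell_nonneg _)]
    gcongr
    exact doubleWell_le_four _
  have henergy : Integrable
      fun ρ ↦ ‖deriv φ ρ‖ ^ 2 + c * σ ^ 4 * doubleWell (ρ / σ) * ‖φ ρ‖ ^ 2 := hkin.add hwell
  calc (Theta0 + min 1 c / 10 * σ * ε ^ 2) * ∫ ρ, ‖φ ρ‖ ^ 2
      = Theta0 * (∫ ρ, ‖φ ρ‖ ^ 2) + ε ^ 2 * (min 1 c / 10 * σ * ∫ ρ, ‖φ ρ‖ ^ 2) := by ring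
    _ ≤ Theta0 * (∫ ρ, ‖φ ρ‖ ^ 2) + ε ^ 2
          * ∫ ρ, (‖deriv φ ρ‖ ^ 2 + c * σ ^ 4 * doubleWell (ρ / σ) * ‖φ ρ‖ ^ 2) := by
        gcongr
        exact mul_integral_norm_sq_le_doubleWell hc hσ hφ hmass hkin
    _ = ∫ ρ, (Theta0 * ‖φ ρ‖ ^ 2
          + ε ^ 2 * (‖deriv φ ρ‖ ^ 2 + c * σ ^ 4 * doubleWell (ρ / σ) * ‖φ ρ‖ ^ 2)) := by
        rw [integral_add (hmass.const_mul _) (henergy.const_mul _), integral_const_mul,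
          integral_const_mul]
    _ = ∫ ρ, (ε ^ 2 * ‖deriv φ ρ‖ ^ 2 + effectivePotential c ε σ ρ * ‖φ ρ‖ ^ 2) := by
        congr 1 with ρ
        rw [effectivePotential]
        ring

end EffectivePotential

lemma exists_Theta0_add_mul_sqrt_le {ξ₀ D₀ : ℝ} (hξ₀ : deGennes ξ₀ = Theta0) (hD₀ : 0 < D₀) :
    ∃ C > 0, ∀ ε δ : ℝ, 0 < ε → δ ≤ -4 → ε * |δ| ≤ D₀ →
      ∀ ψ : ℝ × ℝ → ℂ, ContDiff ℝ 1 ψ → IntegrableOn (fun p ↦ ‖ψ p‖ ^ 2) halfPlane →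
        IntegrableOn (fun p ↦ transverseEnergy (fun ρ ↦ ξ₀ + ε * (ρ ^ 2 / 2 + δ)) ψ p
          + ε ^ 2 * ‖fderiv ℝ ψ p (0, 1)‖ ^ 2) halfPlane →
        (Theta0 + C * √(-δ) * ε ^ 2) * ∫ p in halfPlane, ‖ψ p‖ ^ 2
          ≤ ∫ p in halfPlane, (transverseEnergy (fun ρ ↦ ξ₀ + ε * (ρ ^ 2 / 2 + δ)) ψ p
            + ε ^ 2 * ‖fderiv ℝ ψ p (0, 1)‖ ^ 2) := by
  obtain ⟨c₀, hc₀, hnondeg⟩ := exists_Theta0_add_min_le_deGennes hξ₀ hD₀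
  have hc : 0 < c₀ / (4 * (1 + D₀ ^ 2)) := by positivity
  refine ⟨min 1 (c₀ / (4 * (1 + D₀ ^ 2))) / 10, by positivity, ?_⟩
  intro ε δ hε hδ hεδ ψ hψ hmass hform
  have hσ : 2 ≤ √(-δ) := le_sqrt_of_sq_le (by linarith)
  have hδσ : δ = -√(-δ) ^ 2 := by rw [sq_sqrt (by linarith), neg_neg]
  have hεσ : ε * √(-δ) ^ 2 ≤ D₀ := by rwa [sq_sqrt (by linarith), ← abs_of_neg (by linarith)]
  have hW (ρ : ℝ) : effectivePotential (c₀ / (4 * (1 + D₀ ^ 2))) ε √(-δ) ρ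
      ≤ deGennes (ξ₀ + ε * (ρ ^ 2 / 2 + δ)) := by
    have hle := effectivePotential_le_deGennes hc₀.le hε.le (by positivity) hεσ hnondeg ρ
    rwa [sub_eq_add_neg, ← hδσ] at hle
  exact mul_setIntegral_norm_sq_le_of_effective hψ (by fun_prop) continuous_effectivePotential
    (abs_effectivePotential_le hc.le) hW (by positivity) hmass hform
    fun φ hφ ↦ mul_integral_norm_sq_le_effectivePotential hc.le hσ hφ

lemma rpow_sixth_mul_rpow_neg_sixth {B : ℝ} (hB : 0 < B) :
    B ^ ((1 : ℝ) / 6) * B ^ (-(1 : ℝ) / 6) = 1 := by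
  rw [← rpow_add hB]
  norm_num

lemma rpow_neg_third_eq_sq {B : ℝ} (hB : 0 < B) :
    B ^ (-(1 : ℝ) / 3) = (B ^ (-(1 : ℝ) / 6)) ^ 2 := by
  rw [← rpow_mul_natCast hB.le]
  norm_num

lemma qIntegrand_eq_transverseEnergy_add {B : ℝ} (hB : 0 < B) (m : ℤ) (ξ₀ : ℝ)
    (ψ : ℝ × ℝ → ℂ) :
    qIntegrand B m ψ = fun p ↦
      transverseEnergy (fun ρ ↦ ξ₀ + B ^ (-(1 : ℝ) / 6) * (ρ ^ 2 / 2 + delta1 B m ξ₀)) ψ p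
        + (B ^ (-(1 : ℝ) / 6)) ^ 2 * ‖fderiv ℝ ψ p (0, 1)‖ ^ 2 := by
  funext p
  have hpot : p.1 + ((m : ℝ) - B / 2) / √B + B ^ (-(1 : ℝ) / 6) * p.2 ^ 2 / 2
      = p.1 + (ξ₀ + B ^ (-(1 : ℝ) / 6) * (p.2 ^ 2 / 2 + delta1 B m ξ₀)) := by
    rw [delta1]
    linear_combination
      (ξ₀ - ((m : ℝ) - B / 2) / √B) * rpow_sixth_mul_rpow_neg_sixth hB
  rw [qIntegrand, qPot, transverseEnergy, hpot, rpow_neg_third_eq_sq hB]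

theorem statement6_general (ξ₀ : ℝ) (hξ₀ : deGennes ξ₀ = Theta0) (D₀ : ℝ) (hD₀ : 0 < D₀) :
    ∃ C Dt : ℝ, 0 < C ∧ 0 < Dt ∧
      ∀ D : ℝ, Dt < D → ∀ B : ℝ, 0 < B → ∀ m : ℤ,
        delta1 B m ξ₀ < -D → |delta1 B m ξ₀| ≤ D₀ * B ^ ((1 : ℝ) / 6) →
        ∀ ψ : ℝ × ℝ → ℂ, InFormDomain B m ψ →
          (Theta0 + C * D ^ ((1 : ℝ) / 2) * B ^ (-(1 : ℝ) / 3)) * (∫ p in halfPlane, ‖ψ p‖ ^ 2)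
            ≤ qForm B m ψ := by
  obtain ⟨C, hC, hbound⟩ := exists_Theta0_add_mul_sqrt_le hξ₀ hD₀
  refine ⟨C, 4, hC, four_pos, fun D hD B hB m hδD hδD₀ ψ ⟨hψ, hmass, hform⟩ ↦ ?_⟩
  have hεδ : B ^ (-(1 : ℝ) / 6) * |delta1 B m ξ₀| ≤ D₀ := by
    calc _ ≤ B ^ (-(1 : ℝ) / 6) * (D₀ * B ^ ((1 : ℝ) / 6)) := by gcongr
      _ = D₀ := by linear_combination D₀ * rpow_sixth_mul_rpow_neg_sixth hB
  have hDσ : D ^ ((1 : ℝ) / 2) ≤ √(-delta1 B m ξ₀) := by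
    rw [← sqrt_eq_rpow]
    exact sqrt_le_sqrt (by linarith)
  rw [qIntegrand_eq_transverseEnergy_add hB m ξ₀] at hform
  rw [qForm, qIntegrand_eq_transverseEnergy_add hB m ξ₀, rpow_neg_third_eq_sq hB]
  refine le_trans ?_ (hbound _ _ (by positivity) (by linarith) hεδ ψ hψ hmass hform)
  gcongr

/-- Lemma 2.10: lower bound for large negative `δ̃₁`. -/
theorem statement6
    (ξ₀ : ℝ) (hξ₀ : deGennes ξ₀ = Theta0)
    (hξ₀uniq : ∀ ξ : ℝ, deGennes ξ = Theta0 → ξ = ξ₀)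
    (D₀ : ℝ) (hD₀ : 0 < D₀) :
    ∃ C Dt : ℝ, 0 < C ∧ 0 < Dt ∧
      ∀ D : ℝ, Dt < D → ∀ B : ℝ, D₀ ^ 18 < B → ∀ m : ℤ,
        delta1 B m ξ₀ < -D → |delta1 B m ξ₀| ≤ D₀ * B ^ ((1:ℝ)/6) →
        ∀ ψ : ℝ × ℝ → ℂ, InFormDomain B m ψ →
          (Theta0 + C * D ^ ((1:ℝ)/2) * B ^ (-(1:ℝ)/3)) * (∫ p in halfPlane, ‖ψ p‖ ^ 2)
            ≤ qForm B m ψ := by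
  obtain ⟨C, Dt, hC, hDt, hbound⟩ := statement6_general ξ₀ hξ₀ D₀ hD₀
  exact ⟨C, Dt, hC, hDt, fun D hD B hB ↦ hbound D hD B ((pow_pos hD₀ 18).trans hB)⟩
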